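/- Let 0 < λ and let η ∈ (−λ, λ). Then the principal-value integral lim_{ε→0⁺} [ ∫_{−λ}^{η−ε} 6μ(2μ² − λ²)/((μ − η)·√(λ² − μ²)) dμ + ∫_{η+ε}^{λ} 6μ(2μ² − λ²)/((μ − η)·√(λ² − μ²)) dμ ] exists and equals 12πη². Equivalently, the finite Hilbert transform of the odd extension of the genus-0 condensate spectral flux density v(μ) = 6μ(2μ² − λ²)/(π·√(λ² − μ²)) equals 12η²/π on (−λ, λ). -/

import Mathlib

/-!
The integrand has an explicit primitive. With `s = √(λ² - μ²)` and `c = √(λ² - η²)`, polynomial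
division by `μ - η` gives
`6μ(2μ² - λ²) = (μ - η)(12μ² + 12μη + 12η² - 6λ²) + 6η(2η² - λ²)`,
so away from `μ = η` a primitive is
`-6(μ + 2η)s + 12η² arcsin(μ/λ) - (6η(2η² - λ²)/c) (log(λ² - ημ + cs) - log|μ - η|)`.
All terms except `log|μ - η|` form a function `regPart` that is continuous on `[-λ, λ]`. In the
principal value the values at `η ± ε` cancel in the limit, because `log|μ - η|` is even about `η`
and `regPart` is continuous at `η`. At `μ = ±λ` both logarithmic terms reduce to `log λ`, so only
`12η² (arcsin 1 - arcsin (-1)) = 12πη²` remains.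
-/

/-- The part of the primitive of the integrand that is continuous on all of `[-lam, lam]`. -/
noncomputable def regPart (lam η μ : ℝ) : ℝ :=
  -6 * (μ + 2 * η) * Real.sqrt (lam ^ 2 - μ ^ 2) + 12 * η ^ 2 * Real.arcsin (μ / lam)
    - 6 * η * (2 * η ^ 2 - lam ^ 2) / Real.sqrt (lam ^ 2 - η ^ 2) *
      Real.log (lam ^ 2 - η * μ + Real.sqrt (lam ^ 2 - η ^ 2) * Real.sqrt (lam ^ 2 - μ ^ 2))

/-- The primitive of the integrand away from `η`; `Real.log (μ - η)` is `log |μ - η|`, so the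
same formula serves both sides of the singularity. -/
noncomputable def prim (lam η μ : ℝ) : ℝ :=
  regPart lam η μ
    + 6 * η * (2 * η ^ 2 - lam ^ 2) / Real.sqrt (lam ^ 2 - η ^ 2) * Real.log (μ - η)

lemma logArg_pos {lam η μ : ℝ} (hlam : 0 < lam) (hη : η ∈ Set.Ioo (-lam) lam)
    (hμ : μ ∈ Set.Icc (-lam) lam) :
    0 < lam ^ 2 - η * μ +
      Real.sqrt (lam ^ 2 - η ^ 2) * Real.sqrt (lam ^ 2 - μ ^ 2) := by
  obtain ⟨h1, h2⟩ := hη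
  obtain ⟨h3, h4⟩ := hμ
  have h5 : η * μ < lam ^ 2 := by
    have ha : |η| < lam := abs_lt.2 ⟨h1, h2⟩
    have hb : |μ| ≤ lam := abs_le.2 ⟨h3, h4⟩
    calc η * μ ≤ |η| * |μ| := by rw [← abs_mul]; exact le_abs_self _
      _ ≤ |η| * lam := by gcongr
      _ < lam * lam := by gcongr
      _ = lam ^ 2 := by ring
  have := mul_nonneg (Real.sqrt_nonneg (lam ^ 2 - η ^ 2)) (Real.sqrt_nonneg (lam ^ 2 - μ ^ 2))
  linarith

lemma sq_sub_pos {lam μ : ℝ} (hμ : μ ∈ Set.Ioo (-lam) lam) : 0 < lam ^ 2 - μ ^ 2 := by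
  nlinarith [hμ.1, hμ.2]

lemma continuousOn_regPart {lam η : ℝ} (hlam : 0 < lam) (hη : η ∈ Set.Ioo (-lam) lam) :
    ContinuousOn (regPart lam η) (Set.Icc (-lam) lam) := by
  unfold regPart
  refine ContinuousOn.sub ?_ (ContinuousOn.mul continuousOn_const (ContinuousOn.log ?_ ?_))
  · exact Continuous.continuousOn (by fun_prop)
  · exact Continuous.continuousOn (by fun_prop)
  · intro μ hμ
    exact (logArg_pos hlam hη hμ).ne'

lemma hasDerivAt_arcsin_div {lam μ : ℝ} (hlam : 0 < lam) (hμ : μ ∈ Set.Ioo (-lam) lam) :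
    HasDerivAt (fun x => Real.arcsin (x / lam)) (1 / Real.sqrt (lam ^ 2 - μ ^ 2)) μ := by
  have h1 : μ / lam ≠ -1 := by
    intro h; rw [div_eq_iff hlam.ne'] at h; linarith [hμ.1]
  have h2 : μ / lam ≠ 1 := by
    intro h; rw [div_eq_iff hlam.ne'] at h; linarith [hμ.2]
  have h := (Real.hasDerivAt_arcsin h1 h2).comp μ ((hasDerivAt_id μ).div_const lam)
  refine h.congr_deriv ?_
  have h3 : Real.sqrt (lam ^ 2 - μ ^ 2) = lam * Real.sqrt (1 - (μ / lam) ^ 2) := by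
    rw [show lam ^ 2 - μ ^ 2 = lam ^ 2 * (1 - (μ / lam) ^ 2) by field_simp,
      Real.sqrt_mul (sq_nonneg _), Real.sqrt_sq hlam.le]
  rw [h3]
  simp only [one_div, mul_inv]
  ring

lemma hasDerivAt_prim {lam η μ : ℝ} (hlam : 0 < lam) (hη : η ∈ Set.Ioo (-lam) lam)
    (hμ : μ ∈ Set.Ioo (-lam) lam) (hne : μ ≠ η) :
    HasDerivAt (prim lam η)
      (6 * μ * (2 * μ ^ 2 - lam ^ 2) / ((μ - η) * Real.sqrt (lam ^ 2 - μ ^ 2))) μ := by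
  have hA := logArg_pos hlam hη (Set.Ioo_subset_Icc_self hμ)
  have hs2 := sq_sub_pos hμ
  have hc2 := sq_sub_pos hη
  have hs : HasDerivAt (fun x => Real.sqrt (lam ^ 2 - x ^ 2))
      (-(2 * μ) / (2 * Real.sqrt (lam ^ 2 - μ ^ 2))) μ := by
    have := (((hasDerivAt_id μ).pow 2).const_sub (lam ^ 2)).sqrt hs2.ne'
    simpa using this
  have hlog := ((((hasDerivAt_id μ).const_mul η).const_sub (lam ^ 2)).add
    (hs.const_mul (Real.sqrt (lam ^ 2 - η ^ 2)))).log hA.ne'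
  have hlog2 := ((hasDerivAt_id μ).sub_const η).log (sub_ne_zero.2 hne)
  have h := ((((((hasDerivAt_id μ).add_const (2 * η)).const_mul (-6)).mul hs).add
    ((hasDerivAt_arcsin_div hlam hμ).const_mul (12 * η ^ 2))).sub
    (hlog.const_mul (6 * η * (2 * η ^ 2 - lam ^ 2) / Real.sqrt (lam ^ 2 - η ^ 2)))).add
    (hlog2.const_mul (6 * η * (2 * η ^ 2 - lam ^ 2) / Real.sqrt (lam ^ 2 - η ^ 2)))
  refine h.congr_deriv ?_
  have hspos := Real.sqrt_pos.2 hs2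
  have hcpos := Real.sqrt_pos.2 hc2
  have hsq := Real.sq_sqrt hs2.le
  have hcq := Real.sq_sqrt hc2.le
  simp only [id, Pi.add_apply] at *
  generalize Real.sqrt (lam ^ 2 - μ ^ 2) = s at *
  generalize Real.sqrt (lam ^ 2 - η ^ 2) = c at *
  have hd : μ - η ≠ 0 := sub_ne_zero.2 hne
  -- The difference of the two logarithms has derivative `-c / ((μ - η) s)`.
  have key : (-(η * 1) + c * (-(2 * μ) / (2 * s))) / (lam ^ 2 - η * μ + c * s)
      = 1 / (μ - η) - c / ((μ - η) * s) := by
    rw [div_eq_iff hA.ne']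
    field_simp
    linear_combination (-c) * hsq + s * hcq
  rw [key]
  field_simp
  linear_combination (6 * c * (η - μ)) * hsq

/-- Integrability of the endpoint singularities: `1 / √(λ² - μ²)` is the nonnegative derivative
of the continuous function `arcsin (μ / λ)`. -/
lemma intervalIntegrable_inv_sqrt {lam : ℝ} (hlam : 0 < lam) :
    IntervalIntegrable (fun μ => 1 / Real.sqrt (lam ^ 2 - μ ^ 2)) MeasureTheory.volume
      (-lam) lam := by
  have hle : -lam ≤ lam := by linarith
  apply intervalIntegral.intervalIntegrable_deriv_of_nonneg
    (g := fun x => Real.arcsin (x / lam))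
  · exact Continuous.continuousOn (by fun_prop)
  · intro x hx
    rw [min_eq_left hle, max_eq_right hle] at hx
    exact hasDerivAt_arcsin_div hlam hx
  · intro x _
    positivity

lemma integral_eq_prim {lam η a b : ℝ} (hlam : 0 < lam) (hη : η ∈ Set.Ioo (-lam) lam)
    (ha : -lam ≤ a) (hab : a ≤ b) (hb : b ≤ lam) (hn : η ∉ Set.Icc a b) :
    ∫ μ in a..b, 6 * μ * (2 * μ ^ 2 - lam ^ 2) / ((μ - η) * Real.sqrt (lam ^ 2 - μ ^ 2))
      = prim lam η b - prim lam η a := by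
  have hne : ∀ x ∈ Set.Icc a b, x - η ≠ 0 := by
    intro x hx h
    exact hn (sub_eq_zero.1 h ▸ hx)
  apply intervalIntegral.integral_eq_sub_of_hasDerivAt_of_le hab
  · unfold prim
    refine ((continuousOn_regPart hlam hη).mono (Set.Icc_subset_Icc ha hb)).add
      (ContinuousOn.mul continuousOn_const (ContinuousOn.log ?_ hne))
    exact Continuous.continuousOn (by fun_prop)
  · intro x hx
    exact hasDerivAt_prim hlam hη ⟨by linarith [hx.1], by linarith [hx.2]⟩
      (sub_ne_zero.1 (hne x (Set.Ioo_subset_Icc_self hx)))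
  · have h1 : IntervalIntegrable (fun μ => 1 / Real.sqrt (lam ^ 2 - μ ^ 2))
        MeasureTheory.volume a b := by
      refine (intervalIntegrable_inv_sqrt hlam).mono_set ?_
      rw [Set.uIcc_of_le hab, Set.uIcc_of_le (by linarith)]
      exact Set.Icc_subset_Icc ha hb
    have h2 : ContinuousOn (fun μ : ℝ => 6 * μ * (2 * μ ^ 2 - lam ^ 2) / (μ - η))
        (Set.uIcc a b) := by
      rw [Set.uIcc_of_le hab]
      exact ContinuousOn.div (Continuous.continuousOn (by fun_prop))
        (Continuous.continuousOn (by fun_prop)) hne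
    refine (h1.continuousOn_mul h2).congr ?_
    intro x _
    simp only [div_mul_div_comm, mul_one]

lemma prim_endpoints {lam η : ℝ} (hlam : 0 < lam) (hη : η ∈ Set.Ioo (-lam) lam) :
    prim lam η lam - prim lam η (-lam) = 12 * Real.pi * η ^ 2 := by
  have h1 : 0 < lam - η := by linarith [hη.2]
  have h2 : 0 < lam + η := by linarith [hη.1]
  have e1 : Real.log (lam ^ 2 - η * lam) = Real.log lam + Real.log (lam - η) := by
    rw [← Real.log_mul hlam.ne' h1.ne']; ring_nf
  have e2 : Real.log (lam ^ 2 - η * -lam) = Real.log lam + Real.log (-lam - η) := by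
    rw [← Real.log_neg_eq_log (-lam - η), ← Real.log_mul hlam.ne' (by linarith)]; ring_nf
  have e3 : -lam / lam = -1 := by field_simp
  simp only [prim, regPart, neg_sq, sub_self, Real.sqrt_zero, mul_zero, add_zero, e1, e2, e3,
    div_self hlam.ne', Real.arcsin_one, Real.arcsin_neg]
  ring

/-- Finite Hilbert transform of the odd extension of the genus-0 condensate
spectral flux density: the principal-value integral of
`6μ(2μ²-λ²)/((μ-η)√(λ²-μ²))` over `(-λ, λ)` equals `12πη²`. -/
theorem genus0_condensate_FHT_v (lam η : ℝ) (hlam : 0 < lam)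
    (hη : η ∈ Set.Ioo (-lam) lam) :
    Filter.Tendsto
      (fun ε : ℝ =>
        (∫ μ in (-lam)..(η - ε),
          6 * μ * (2 * μ ^ 2 - lam ^ 2) / ((μ - η) * Real.sqrt (lam ^ 2 - μ ^ 2))) +
        ∫ μ in (η + ε)..lam,
          6 * μ * (2 * μ ^ 2 - lam ^ 2) / ((μ - η) * Real.sqrt (lam ^ 2 - μ ^ 2)))
      (nhdsWithin 0 (Set.Ioi 0)) (nhds (12 * Real.pi * η ^ 2)) := by
  have hreg : ContinuousAt (regPart lam η) η :=
    (continuousOn_regPart hlam hη).continuousAt (Icc_mem_nhds hη.1 hη.2)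
  have hlim : Filter.Tendsto
      (fun ε : ℝ => 12 * Real.pi * η ^ 2 + (regPart lam η (η - ε) - regPart lam η (η + ε)))
      (nhdsWithin 0 (Set.Ioi 0)) (nhds (12 * Real.pi * η ^ 2)) := by
    have hm : Filter.Tendsto (fun ε : ℝ => η - ε) (nhds 0) (nhds η) :=
      Continuous.tendsto' (by fun_prop) _ _ (by simp)
    have hp : Filter.Tendsto (fun ε : ℝ => η + ε) (nhds 0) (nhds η) :=
      Continuous.tendsto' (by fun_prop) _ _ (by simp)
    have h := ((hreg.tendsto.comp hm).sub (hreg.tendsto.comp hp)).const_add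
      (12 * Real.pi * η ^ 2)
    rw [sub_self, add_zero] at h
    exact h.mono_left nhdsWithin_le_nhds
  refine hlim.congr' ?_
  have hpos : 0 < min (η + lam) (lam - η) :=
    lt_min (by linarith [hη.1]) (by linarith [hη.2])
  filter_upwards [Ioo_mem_nhdsGT hpos] with ε hε
  have h0 : 0 < ε := hε.1
  have h1 : ε < η + lam := hε.2.trans_le (min_le_left _ _)
  have h2 : ε < lam - η := hε.2.trans_le (min_le_right _ _)
  rw [integral_eq_prim hlam hη le_rfl (by linarith) (by linarith)
      (fun h => by linarith [h.2]),
    integral_eq_prim hlam hη (by linarith) (by linarith) le_rfl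
      (fun h => by linarith [h.1]), ← prim_endpoints hlam hη]
  -- `log |μ - η|` takes the same value at `η - ε` and `η + ε`.
  have e : prim lam η (η - ε) - prim lam η (η + ε)
      = regPart lam η (η - ε) - regPart lam η (η + ε) := by
    simp only [prim, show η - ε - η = -ε by ring, show η + ε - η = ε by ring,
      Real.log_neg_eq_log]
    ring
  linarith
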